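/- Let E ⊆ ℝⁿ be a bounded measurable set that is Schwarz symmetric with respect to the x₁-axis, with the additional property that for each x₁ ∈ ℝ the signed distance section x' ↦ d̄_E(x₁,x') is radially symmetric and nondecreasing in |x'|. Then for any bounded measurable set F ⊆ ℝⁿ, the Schwarz symmetrization F* of F with respect to the x₁-axis satisfies ∫_{F*} d̄_E dx ≤ ∫_F d̄_E dx. -/

import Mathlib

open Set Metric Classical MeasureTheory

/-- Euclidean distance on ℝ × ℝ^{n-1}. -/
noncomputable def pdist {m : ℕ} (x y : ℝ × EuclideanSpace ℝ (Fin m)) : ℝ :=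
  Real.sqrt ((x.1 - y.1)^2 + (dist x.2 y.2)^2)

/-- Euclidean distance from a point to a set in ℝ × ℝ^{n-1}. -/
noncomputable def pInfDist {m : ℕ} (A : Set (ℝ × EuclideanSpace ℝ (Fin m)))
    (x : ℝ × EuclideanSpace ℝ (Fin m)) : ℝ :=
  sInf (pdist x '' A)

/-- Signed (Euclidean) distance to a set in ℝ × ℝ^{n-1}. -/
noncomputable def psdist {m : ℕ} (A : Set (ℝ × EuclideanSpace ℝ (Fin m)))
    (x : ℝ × EuclideanSpace ℝ (Fin m)) : ℝ :=
  if x ∈ A then -pInfDist Aᶜ x else pInfDist A x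

/-!
Let `f` be the signed distance. By Fubini it is enough to compare, for each `t`, the integrals of
`f (t, ·)` over the slices of `F*` and of `F`. These have the same finite measure, and `f (t, ·)` is
everywhere at least as large outside the centered ball `F*ₜ` as inside it, so trading `F*ₜ \ Fₜ` for
`Fₜ \ F*ₜ` cannot decrease the integral. The signed distance to any set is continuous, being the
difference of the distances to the set and to its complement, so it is integrable over the bounded
sets `F` and `F*`.
-/

section SignedDistance

variable {m : ℕ}

theorem pdist_eq_dist_toLp (x y : ℝ × EuclideanSpace ℝ (Fin m)) :
    pdist x y = dist (WithLp.toLp 2 x) (WithLp.toLp 2 y) := by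
  simp [WithLp.prod_dist_eq_of_L2, pdist, Real.dist_eq, sq_abs]

theorem pInfDist_eq_infDist_toLp (A : Set (ℝ × EuclideanSpace ℝ (Fin m)))
    (x : ℝ × EuclideanSpace ℝ (Fin m)) :
    pInfDist A x = infDist (WithLp.toLp 2 x) (WithLp.toLp 2 '' A) := by
  simp only [pInfDist, infDist_eq_iInf, ← sInf_image', image_image, ← pdist_eq_dist_toLp]

theorem continuous_pInfDist (A : Set (ℝ × EuclideanSpace ℝ (Fin m))) : Continuous (pInfDist A) := by
  rw [funext (pInfDist_eq_infDist_toLp A)]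
  exact (continuous_infDist_pt _).comp (WithLp.prod_continuous_toLp 2 _ _)

theorem pInfDist_of_mem {A : Set (ℝ × EuclideanSpace ℝ (Fin m))}
    {x : ℝ × EuclideanSpace ℝ (Fin m)} (hx : x ∈ A) : pInfDist A x = 0 := by
  rw [pInfDist_eq_infDist_toLp, infDist_zero_of_mem (mem_image_of_mem _ hx)]

theorem psdist_eq_pInfDist_sub (A : Set (ℝ × EuclideanSpace ℝ (Fin m)))
    (x : ℝ × EuclideanSpace ℝ (Fin m)) : psdist A x = pInfDist A x - pInfDist Aᶜ x := by
  by_cases hx : x ∈ A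
  · simp [psdist, hx, pInfDist_of_mem hx]
  · simp [psdist, hx, pInfDist_of_mem (mem_compl hx)]

theorem continuous_psdist (A : Set (ℝ × EuclideanSpace ℝ (Fin m))) : Continuous (psdist A) := by
  rw [funext (psdist_eq_pInfDist_sub A)]
  exact (continuous_pInfDist A).sub (continuous_pInfDist Aᶜ)

end SignedDistance

theorem setIntegral_le_setIntegral_of_measure_eq {α : Type*} [MeasurableSpace α] {μ : Measure α}
    {A B : Set α} {f : α → ℝ} (hA : MeasurableSet A) (hB : MeasurableSet B)
    (hAB : μ A = μ B) (hA_fin : μ A ≠ ⊤) (hfA : IntegrableOn f A μ) (hfB : IntegrableOn f B μ)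
    (hle : ∀ x ∈ A \ B, ∀ y ∈ B \ A, f x ≤ f y) :
    ∫ x in A, f x ∂μ ≤ ∫ x in B, f x ∂μ := by
  have hdiff : μ (A \ B) = μ (B \ A) :=
    measure_sdiff_symm hA.nullMeasurableSet hB.nullMeasurableSet hAB
      (measure_ne_top_of_subset inter_subset_left hA_fin)
  suffices h : ∫ x in A \ B, f x ∂μ ≤ ∫ x in B \ A, f x ∂μ by
    rw [← integral_inter_add_sdiff hB hfA, ← integral_inter_add_sdiff hA hfB, inter_comm B A]
    gcongr
  by_cases h₀ : μ (A \ B) = 0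
  · rw [setIntegral_measure_zero _ h₀, setIntegral_measure_zero _ (hdiff ▸ h₀)]
  obtain ⟨c, hc_upper, hc_lower⟩ :
      (upperBounds (f '' (A \ B)) ∩ lowerBounds (f '' (B \ A))).Nonempty :=
    exists_between_of_forall_le ((nonempty_of_measure_ne_zero h₀).image f)
      ((nonempty_of_measure_ne_zero (hdiff ▸ h₀)).image f)
      (forall_mem_image.2 fun x hx ↦ forall_mem_image.2 (hle x hx))
  have hfin : μ (A \ B) ≠ ⊤ := measure_ne_top_of_subset sdiff_subset hA_fin
  calc ∫ x in A \ B, f x ∂μ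
    _ ≤ ∫ _ in A \ B, c ∂μ :=
      setIntegral_mono_on (hfA.mono_set sdiff_subset) (integrableOn_const hfin) (hA.diff hB)
        fun x hx ↦ hc_upper (mem_image_of_mem f hx)
    _ = ∫ _ in B \ A, c ∂μ := by simp only [setIntegral_const, measureReal_def, hdiff]
    _ ≤ ∫ x in B \ A, f x ∂μ :=
      setIntegral_mono_on (integrableOn_const (hdiff ▸ hfin)) (hfB.mono_set sdiff_subset)
        (hB.diff hA) fun x hx ↦ hc_lower (mem_image_of_mem f hx)

section Slices

variable {α β G : Type*} [MeasurableSpace α] [MeasurableSpace β] [NormedAddCommGroup G]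
  {μ : Measure α} {ν : Measure β} {S T : Set (α × β)}

theorem integral_indicator_slice [NormedSpace ℝ G] (hS : MeasurableSet S) (f : α × β → G) (t : α) :
    ∫ y, S.indicator f (t, y) ∂ν = ∫ y in Prod.mk t ⁻¹' S, f (t, y) ∂ν :=
  integral_indicator (f := fun y ↦ f (t, y)) (measurable_prodMk_left hS)

variable [SFinite μ] [SFinite ν]

theorem ae_integrableOn_slice {f : α × β → G} (hS : MeasurableSet S)
    (hf : IntegrableOn f S (μ.prod ν)) :
    ∀ᵐ t ∂μ, IntegrableOn (fun y ↦ f (t, y)) (Prod.mk t ⁻¹' S) ν := by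
  filter_upwards [((integrable_indicator_iff hS).2 hf).prod_right_ae] with t ht
  exact (integrable_indicator_iff (measurable_prodMk_left hS)).1 ht

theorem setIntegral_prod_le_of_ae_slice {f : α × β → ℝ} (hS : MeasurableSet S)
    (hT : MeasurableSet T) (hfS : IntegrableOn f S (μ.prod ν)) (hfT : IntegrableOn f T (μ.prod ν))
    (hle : ∀ᵐ t ∂μ,
      ∫ y in Prod.mk t ⁻¹' S, f (t, y) ∂ν ≤ ∫ y in Prod.mk t ⁻¹' T, f (t, y) ∂ν) :
    ∫ p in S, f p ∂μ.prod ν ≤ ∫ p in T, f p ∂μ.prod ν := by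
  have hS_ind := (integrable_indicator_iff hS).2 hfS
  have hT_ind := (integrable_indicator_iff hT).2 hfT
  rw [← integral_indicator hS, ← integral_indicator hT, integral_prod _ hS_ind,
    integral_prod _ hT_ind]
  refine integral_mono_ae hS_ind.integral_prod_left hT_ind.integral_prod_left ?_
  simpa only [Filter.EventuallyLE, integral_indicator_slice hS, integral_indicator_slice hT]
    using hle

end Slices

theorem ball_subset_closedBall_of_measure_le {X : Type*} [PseudoMetricSpace X] [ProperSpace X]
    [MeasurableSpace X] [OpensMeasurableSpace X] {ν : Measure X} [ν.IsOpenPosMeasure]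
    [IsFiniteMeasureOnCompacts ν] {x : X} {r s : ℝ} (h : ν (ball x r) ≤ ν (closedBall x s)) :
    ball x r ⊆ closedBall x s := by
  rcases le_or_gt r s with hrs | hsr
  · exact ball_subset_closedBall.trans (closedBall_subset_closedBall hrs)
  have hae : closedBall x s =ᵐ[ν] ball x r :=
    ae_eq_of_subset_of_measure_ge (closedBall_subset_ball hsr) h
      measurableSet_closedBall.nullMeasurableSet measure_ball_lt_top.ne
  rw [← sdiff_eq_empty, ← (isOpen_ball.sdiff isClosed_closedBall).measure_eq_zero_iff ν]
  exact ae_le_set.1 hae.symm.le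

theorem measure_ball_norm_lt_iff {V : Type*} [SeminormedAddCommGroup V] [NormedSpace ℝ V]
    [ProperSpace V] [MeasurableSpace V] [OpensMeasurableSpace V] {ν : Measure V}
    [ν.IsOpenPosMeasure] [IsFiniteMeasureOnCompacts ν] {y : V} {r : ℝ} :
    ν (ball 0 ‖y‖) < ν (ball 0 r) ↔ ‖y‖ < r := by
  refine ⟨fun h ↦ lt_of_not_ge fun hr ↦ h.not_ge (measure_mono (ball_subset_ball hr)), fun h ↦ ?_⟩
  rcases eq_or_ne ‖y‖ 0 with hy | hy
  · simpa [hy] using measure_ball_pos ν (0 : V) (hy ▸ h)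
  by_contra! hle
  have hsub : ball (0 : V) r ⊆ closedBall 0 ‖y‖ :=
    ball_subset_closedBall_of_measure_le (hle.trans (measure_mono ball_subset_closedBall))
  have hy_int : y ∈ interior (closedBall 0 ‖y‖) :=
    interior_maximal hsub isOpen_ball (mem_ball_zero_iff.2 h)
  simp [interior_closedBall (0 : V) hy] at hy_int

/-- `F'` is the Schwarz symmetrization of `F` with respect to the first factor: each slice of `F'`
is an open ball centered at `0` with the same `ν`-measure as the corresponding slice of `F`. It is
a relation because a slice of infinite measure may have no such ball; an empty slice of `F'` is a
ball of nonpositive radius. -/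
def IsSchwarzSymmetrization {α V : Type*} [SeminormedAddCommGroup V] [MeasurableSpace V]
    (ν : Measure V) (F' F : Set (α × V)) : Prop :=
  ∀ t, (∃ r, Prod.mk t ⁻¹' F' = ball 0 r) ∧ ν (Prod.mk t ⁻¹' F') = ν (Prod.mk t ⁻¹' F)

namespace IsSchwarzSymmetrization

variable {α V : Type*} [SeminormedAddCommGroup V] [MeasurableSpace V] {ν : Measure V}
  {F F' : Set (α × V)}

theorem norm_le_norm (h : IsSchwarzSymmetrization ν F' F) {t : α} {y z : V}
    (hy : (t, y) ∈ F') (hz : (t, z) ∉ F') : ‖y‖ ≤ ‖z‖ := by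
  obtain ⟨r, hr⟩ := (h t).1
  simp only [← mem_preimage (f := Prod.mk t), hr, mem_ball_zero_iff, not_lt] at hy hz
  exact hy.le.trans hz

variable [ProperSpace V] [IsFiniteMeasureOnCompacts ν]

theorem measure_slice_ne_top (h : IsSchwarzSymmetrization ν F' F) (t : α) :
    ν (Prod.mk t ⁻¹' F') ≠ ⊤ := by
  obtain ⟨r, hr⟩ := (h t).1
  exact hr ▸ measure_ball_lt_top.ne

variable [OpensMeasurableSpace V] [ν.IsOpenPosMeasure]

theorem isBounded [PseudoMetricSpace α] (h : IsSchwarzSymmetrization ν F' F)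
    (hF : Bornology.IsBounded F) : Bornology.IsBounded F' := by
  obtain ⟨M, hM⟩ := hF.image_snd.subset_closedBall 0
  refine (hF.image_fst.prod (isBounded_closedBall (x := (0 : V)) (r := M))).subset ?_
  rintro ⟨t, y⟩ hy
  obtain ⟨⟨r, hr⟩, hvol⟩ := h t
  have hslice : Prod.mk t ⁻¹' F ⊆ closedBall 0 M := fun z hz ↦ hM ⟨(t, z), hz, rfl⟩
  have hball : ball (0 : V) r ⊆ closedBall 0 M :=
    ball_subset_closedBall_of_measure_le (hr ▸ hvol.trans_le (measure_mono hslice))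
  have hpos : 0 < ν (Prod.mk t ⁻¹' F') :=
    (hr ▸ isOpen_ball : IsOpen (Prod.mk t ⁻¹' F')).measure_pos ν ⟨y, hy⟩
  obtain ⟨z, hz⟩ := nonempty_of_measure_ne_zero (hvol ▸ hpos.ne')
  exact ⟨⟨(t, z), hz, rfl⟩, hball (hr ▸ hy)⟩

variable [NormedSpace ℝ V]

theorem mem_iff_measure_ball_lt (h : IsSchwarzSymmetrization ν F' F) {p : α × V} :
    p ∈ F' ↔ ν (ball 0 ‖p.2‖) < ν (Prod.mk p.1 ⁻¹' F) := by
  obtain ⟨⟨r, hr⟩, hvol⟩ := h p.1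
  rw [← hvol, hr, measure_ball_norm_lt_iff, ← mem_ball_zero_iff, ← hr, mem_preimage]

variable [MeasurableSpace α]

theorem measurableSet (h : IsSchwarzSymmetrization ν F' F) (hF : MeasurableSet F) :
    MeasurableSet F' := by
  have hball : Monotone fun s ↦ ν (ball (0 : V) s) :=
    fun _ _ hs ↦ measure_mono (ball_subset_ball hs)
  rw [show F' = {p | ν (ball 0 ‖p.2‖) < ν (Prod.mk p.1 ⁻¹' F)} from
    Set.ext fun _ ↦ h.mem_iff_measure_ball_lt]
  exact measurableSet_lt (hball.measurable.comp (continuous_norm.measurable.comp measurable_snd))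
    ((measurable_measure_prodMk_left hF).comp measurable_fst)

theorem setIntegral_le {μ : Measure α} [SFinite μ] {f : α × V → ℝ}
    (h : IsSchwarzSymmetrization ν F' F) (hF : MeasurableSet F)
    (hfF' : IntegrableOn f F' (μ.prod ν)) (hfF : IntegrableOn f F (μ.prod ν))
    (hmono : ∀ t y z, ‖y‖ ≤ ‖z‖ → f (t, y) ≤ f (t, z)) :
    ∫ p in F', f p ∂μ.prod ν ≤ ∫ p in F, f p ∂μ.prod ν := by
  have hF' := h.measurableSet hF
  refine setIntegral_prod_le_of_ae_slice hF' hF hfF' hfF ?_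
  filter_upwards [ae_integrableOn_slice hF' hfF', ae_integrableOn_slice hF hfF] with t htF' htF
  exact setIntegral_le_setIntegral_of_measure_eq (measurable_prodMk_left hF')
    (measurable_prodMk_left hF) (h t).2 (h.measure_slice_ne_top t) htF' htF
    fun y hy z hz ↦ hmono t y z (h.norm_le_norm hy.1 hz.2)

end IsSchwarzSymmetrization

theorem schwarz_symmetrization_decreases_dissipation_general {α V : Type*} [PseudoMetricSpace α]
    [ProperSpace α] [MeasurableSpace α] [SeminormedAddCommGroup V] [NormedSpace ℝ V]
    [ProperSpace V] [MeasurableSpace V] [OpensMeasurableSpace V] {μ : Measure α} [SFinite μ]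
    {ν : Measure V} [IsFiniteMeasureOnCompacts ν] [ν.IsOpenPosMeasure] {f : α × V → ℝ}
    (hf : LocallyIntegrable f (μ.prod ν)) (hmono : ∀ t y z, ‖y‖ ≤ ‖z‖ → f (t, y) ≤ f (t, z))
    {F F' : Set (α × V)} (hF : MeasurableSet F) (hF_bdd : Bornology.IsBounded F)
    (h : IsSchwarzSymmetrization ν F' F) :
    ∫ p in F', f p ∂μ.prod ν ≤ ∫ p in F, f p ∂μ.prod ν := by
  have hf_bdd {S : Set (α × V)} (hS : Bornology.IsBounded S) : IntegrableOn f S (μ.prod ν) :=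
    (hf.integrableOn_isCompact hS.isCompact_closure).mono_set subset_closure
  exact h.setIntegral_le hF (hf_bdd (h.isBounded hF_bdd)) (hf_bdd hF_bdd) hmono

/-- If E ⊆ ℝⁿ = ℝ × ℝ^{n-1} is bounded, measurable, Schwarz symmetric with
respect to the x₁-axis (its slices are centered open balls), and each section
x' ↦ d̄_E(x₁,x') of its signed distance function is radially symmetric and nondecreasing
in |x'|, then for every bounded measurable F, the Schwarz symmetrization F* of F
(slices are centered open balls of the same (n-1)-measure as the slices of F) satisfies
∫_{F*} d̄_E ≤ ∫_F d̄_E. -/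
theorem schwarz_symmetrization_decreases_dissipation
    (m : ℕ) (hm : 1 ≤ m)
    (E : Set (ℝ × EuclideanSpace ℝ (Fin m)))
    (hEmeas : MeasurableSet E) (hEbd : Bornology.IsBounded E)
    (ρ : ℝ → ℝ)
    (hEsym : ∀ t : ℝ, {y : EuclideanSpace ℝ (Fin m) | (t, y) ∈ E} = Metric.ball 0 (ρ t))
    (hrad : ∀ (t : ℝ) (y z : EuclideanSpace ℝ (Fin m)), ‖y‖ = ‖z‖ →
      psdist E (t, y) = psdist E (t, z))
    (hmono : ∀ (t : ℝ) (y z : EuclideanSpace ℝ (Fin m)), ‖y‖ ≤ ‖z‖ →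
      psdist E (t, y) ≤ psdist E (t, z))
    (F : Set (ℝ × EuclideanSpace ℝ (Fin m)))
    (hFmeas : MeasurableSet F) (hFbd : Bornology.IsBounded F)
    (R : ℝ → ℝ)
    (Fstar : Set (ℝ × EuclideanSpace ℝ (Fin m)))
    (hFstar : Fstar = {p : ℝ × EuclideanSpace ℝ (Fin m) | p.2 ∈ Metric.ball 0 (R p.1)})
    (hFstarMeas : MeasurableSet Fstar)
    (hslices : ∀ t : ℝ, volume (Metric.ball (0 : EuclideanSpace ℝ (Fin m)) (R t))
      = volume {y : EuclideanSpace ℝ (Fin m) | (t, y) ∈ F}) :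
    ∫ x in Fstar, psdist E x ≤ ∫ x in F, psdist E x := by
  subst hFstar
  exact schwarz_symmetrization_decreases_dissipation_general
    (continuous_psdist E).locallyIntegrable hmono hFmeas hFbd fun t ↦ ⟨⟨R t, rfl⟩, hslices t⟩
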